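/- arXiv:1603.08917 — 10 statements merged into one kernel-verified Lean document; each statement's English description precedes it below -/
import Mathlib

section
/- For every natural number n ≥ 1, there exists a natural number m with m > n such that p_m^{1/m} < p_n^{1/n}. (Existence part of Theorem 1.) -/
open Real

noncomputable def nthPrime (n : ℕ) : ℕ := Nat.nth Nat.Prime (n - 1)

/-!
Were `p_m ^ (1 / m) ≥ c > 1` for all large `m`, then `1 / p_m ≤ c⁻¹ ^ m` and the sum of the
reciprocals of the primes would converge by comparison with a geometric series. Hence
`p_m ^ (1 / m) < c` for infinitely many `m`, and one takes `c = p_n ^ (1 / n)`.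
-/

open Filter

theorem summable_comp_nth_iff {M : Type*} [AddCommMonoid M] [TopologicalSpace M] {p : ℕ → Prop}
    (hp : {k | p k}.Infinite) {f : ℕ → M} :
    Summable (f ∘ Nat.nth p) ↔ Summable ({k | p k}.indicator f) := by
  have indicator_comp_nth : {k | p k}.indicator f ∘ Nat.nth p = f ∘ Nat.nth p :=
    funext fun k ↦ Set.indicator_of_mem (Nat.nth_mem_of_infinite hp k) f
  rw [← indicator_comp_nth]
  refine (Nat.nth_injective hp).summable_iff fun k hk ↦ Set.indicator_of_notMem ?_ f
  rwa [Nat.range_nth_of_infinite hp] at hk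

theorem not_summable_one_div_nthPrime : ¬ Summable fun m ↦ (1 : ℝ) / nthPrime m := by
  -- Shifting avoids the truncated subtraction: `nthPrime (m + 1)` unfolds to `Nat.nth Nat.Prime m`.
  rw [← summable_nat_add_iff 1]
  exact (summable_comp_nth_iff Nat.infinite_setOfPred_prime).not.mpr not_summable_one_div_on_primes

theorem one_lt_nthPrime (n : ℕ) : 1 < nthPrime n :=
  (Nat.prime_nth_prime (n - 1)).one_lt

section NotSummable

variable {a : ℕ → ℝ} {c : ℝ}

theorem frequently_lt_pow_of_not_summable_one_div (ha : ¬ Summable fun m ↦ 1 / a m) (hc : 1 < c) :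
    ∃ᶠ m in atTop, a m < c ^ m := by
  contrapose! ha with hpow
  have summable_geometric : Summable fun m ↦ 1 / c ^ m := by
    simpa only [one_div_pow] using summable_geometric_of_lt_one (by positivity)
      ((div_lt_one (by positivity)).mpr hc)
  refine summable_geometric.of_norm_bounded_eventually_nat ?_
  filter_upwards [hpow] with m hm
  have hcm : 0 < c ^ m := by positivity
  rw [norm_of_nonneg (one_div_nonneg.mpr (hcm.le.trans hm))]
  exact one_div_le_one_div_of_le hcm hm

theorem frequently_rpow_one_div_lt_of_not_summable_one_div (ha₀ : ∀ m, 0 ≤ a m)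
    (ha : ¬ Summable fun m ↦ 1 / a m) (hc : 1 < c) :
    ∃ᶠ m : ℕ in atTop, a m ^ ((1 : ℝ) / m) < c := by
  refine ((frequently_lt_pow_of_not_summable_one_div ha hc).and_eventually
    (eventually_gt_atTop 0)).mono fun m ⟨hlt, hm⟩ ↦ ?_
  rwa [one_div, rpow_inv_lt_iff_of_pos (ha₀ m) (by positivity) (mod_cast hm), rpow_natCast]

end NotSummable

theorem exists_smaller_root (n : ℕ) (hn : 1 ≤ n) :
    ∃ m : ℕ, m > n ∧ (nthPrime m : ℝ) ^ ((1 : ℝ) / m) < (nthPrime n : ℝ) ^ ((1 : ℝ) / n) := by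
  have one_lt_root : 1 < (nthPrime n : ℝ) ^ ((1 : ℝ) / n) :=
    one_lt_rpow (mod_cast one_lt_nthPrime n) (by positivity)
  exact frequently_atTop'.mp (frequently_rpow_one_div_lt_of_not_summable_one_div
    (fun _ ↦ Nat.cast_nonneg _) not_summable_one_div_nthPrime one_lt_root) n
end

section
/- For every natural number n ≥ 21, (n+1)·log(n+1) < n^{1+1/n}·(log n)^{1+1/n}. (Lemma 1.) -/
open Real

/-!
After taking logarithms, the increments of `log x` and `log (log x)` over `[x, x + 1]` are bounded
by concavity by `1 / x` and `1 / (x * log x)`. Writing `L = log x`, the claim reduces to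
`1 + 1 / L ≤ L + log L`, and since `log L ≥ 1 - 1 / L` this holds as soon as `L ^ 2 ≥ 2`.
-/

theorem log_add_lt_log_add_div {a h : ℝ} (ha : 0 < a) (hah : 0 < a + h) (hh : h ≠ 0) :
    log (a + h) < log a + h / a := by
  have ratio_ne_one : (a + h) / a ≠ 1 := by simp [add_div, ha.ne', hh]
  calc log (a + h) = log a + log ((a + h) / a) := by
        rw [log_div hah.ne' ha.ne', add_sub_cancel]
    _ < log a + ((a + h) / a - 1) := by
        gcongr
        exact log_lt_sub_one_of_pos (div_pos hah ha) ratio_ne_one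
    _ = log a + h / a := by rw [add_div, div_self ha.ne', add_sub_cancel_left]

theorem log_add_one_lt_log_add_one_div {x : ℝ} (hx : 0 < x) : log (x + 1) < log x + 1 / x :=
  log_add_lt_log_add_div hx (by positivity) one_ne_zero

theorem log_log_add_one_lt_log_log_add {x : ℝ} (hx : 1 < x) :
    log (log (x + 1)) < log (log x) + 1 / x / log x := by
  have x_pos : 0 < x := by positivity
  have log_x_pos : 0 < log x := log_pos hx
  calc log (log (x + 1)) < log (log x + 1 / x) :=
        log_lt_log (log_pos (by linarith)) (log_add_one_lt_log_add_one_div x_pos)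
    _ < log (log x) + 1 / x / log x :=
        log_add_lt_log_add_div log_x_pos (by positivity) (by positivity)

theorem one_add_inv_le_add_log {y : ℝ} (hy : √2 ≤ y) : 1 + y⁻¹ ≤ y + log y := by
  have y_pos : 0 < y := lt_of_lt_of_le (by positivity) hy
  have two_mul_inv_le : 2 * y⁻¹ ≤ y := by
    rw [← div_eq_mul_inv, div_le_iff₀ y_pos, ← sq]
    exact (sqrt_le_left y_pos.le).mp hy
  linarith [one_sub_inv_le_log_of_pos y_pos]

theorem lemma1_general {x : ℝ} (hx : exp √2 ≤ x) :
    (x + 1) * log (x + 1) < x ^ (1 + 1 / x) * log x ^ (1 + 1 / x) := by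
  have one_lt_x : 1 < x := (one_lt_exp_iff.mpr (by positivity)).trans_le hx
  have x_pos : 0 < x := by positivity
  have log_x_pos : 0 < log x := log_pos one_lt_x
  have log_succ_pos : 0 < log (x + 1) := log_pos (by linarith)
  have sqrt_two_le_log : √2 ≤ log x := (le_log_iff_exp_le x_pos).mpr hx
  rw [← log_lt_log_iff (by positivity) (by positivity), log_mul (by positivity) log_succ_pos.ne',
    log_mul (by positivity) (by positivity), log_rpow x_pos, log_rpow log_x_pos]
  calc log (x + 1) + log (log (x + 1))
      < (log x + 1 / x) + (log (log x) + 1 / x / log x) :=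
        add_lt_add (log_add_one_lt_log_add_one_div x_pos) (log_log_add_one_lt_log_log_add one_lt_x)
    _ = log x + log (log x) + 1 / x * (1 + (log x)⁻¹) := by ring
    _ ≤ log x + log (log x) + 1 / x * (log x + log (log x)) := by
        gcongr _ + _ * ?_
        exact one_add_inv_le_add_log sqrt_two_le_log
    _ = (1 + 1 / x) * log x + (1 + 1 / x) * log (log x) := by ring

theorem exp_sqrt_two_lt_nine : exp √2 < 9 :=
  calc exp √2 ≤ exp (2 * 1) := exp_le_exp.mpr (sqrt_le_iff.mpr (by norm_num))
    _ = exp 1 ^ 2 := by rw [← exp_nat_mul, Nat.cast_ofNat]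
    _ < 3 ^ 2 := by gcongr; exact exp_one_lt_three
    _ = 9 := by norm_num

theorem lemma1 (n : ℕ) (hn : 21 ≤ n) :
    ((n : ℝ) + 1) * Real.log ((n : ℝ) + 1) <
      (n : ℝ) ^ (1 + 1 / (n : ℝ)) * (Real.log n) ^ (1 + 1 / (n : ℝ)) := by
  have cast_ge : (21 : ℝ) ≤ n := by exact_mod_cast hn
  exact lemma1_general (by linarith [exp_sqrt_two_lt_nine])
end

section
/- For every natural number n ≥ 21, log(n+1) < (log n)^{1+1/n}. (Step 2 of Lemma 1; the paper proves it for all n > e^3.) -/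
open Real

theorem add_mul_mul_log_le_rpow_one_add {y : ℝ} (hy : 0 < y) (t : ℝ) :
    y + t * (y * log y) ≤ y ^ (1 + t) :=
  calc
    y + t * (y * log y) = y * (log y * t + 1) := by ring
    _ ≤ y * exp (log y * t) := by gcongr; exact add_one_le_exp _
    _ = y ^ (1 + t) := by rw [rpow_add hy, rpow_one, rpow_def_of_pos hy]

theorem log_add_one_lt_log_rpow_of_one_le_mul_log {x : ℝ} (hx : 1 < x)
    (hlog : 1 ≤ log x * log (log x)) : log (x + 1) < log x ^ (1 + 1 / x) :=
  have hx₀ : 0 < x := one_pos.trans hx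
  calc
    log (x + 1) < log x + 1 / x := log_add_one_lt_log_add_one_div hx₀
    _ ≤ log x + 1 / x * (log x * log (log x)) := by
      gcongr
      exact le_mul_of_one_le_right (by positivity) hlog
    _ ≤ log x ^ (1 + 1 / x) := add_mul_mul_log_le_rpow_one_add (log_pos hx) _

theorem div_lt_log_of_exp_one_pow_lt_pow {p q : ℕ} {y : ℝ} (h : exp 1 ^ p < y ^ q) :
    (p / q : ℝ) < log y := by
  have hpq : (p : ℝ) < q * log y := by
    simpa only [log_pow, log_exp, mul_one] using log_lt_log (by positivity) h
  have hq : q ≠ 0 := by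
    rintro rfl
    simp [p.cast_nonneg.not_gt] at hpq
  rwa [div_lt_iff₀' (by positivity)]

theorem exp_one_pow_lt_of_pow_lt {p : ℕ} {a : ℝ} (hp : p ≠ 0) (h : 2.7182818286 ^ p < a) :
    exp 1 ^ p < a :=
  (pow_lt_pow_left₀ exp_one_lt_d9 (exp_pos 1).le hp).trans h

theorem sixteen_div_nine_lt_log_six : 16 / 9 < log 6 := by
  have hpow : exp 1 ^ 16 < (6 : ℝ) ^ 9 := exp_one_pow_lt_of_pow_lt (by norm_num) (by norm_num)
  exact_mod_cast div_lt_log_of_exp_one_pow_lt_pow hpow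

theorem nine_div_sixteen_lt_log_sixteen_div_nine : 9 / 16 < log (16 / 9) := by
  have hpow : exp 1 ^ 9 < (16 / 9 : ℝ) ^ 16 := exp_one_pow_lt_of_pow_lt (by norm_num) (by norm_num)
  exact_mod_cast div_lt_log_of_exp_one_pow_lt_pow hpow

theorem one_lt_mul_log_of_sixteen_div_nine_le {y : ℝ} (hy : 16 / 9 ≤ y) : 1 < y * log y :=
  calc
    (1 : ℝ) = 16 / 9 * (9 / 16) := by norm_num
    _ < 16 / 9 * log (16 / 9) := by gcongr; exact nine_div_sixteen_lt_log_sixteen_div_nine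
    _ ≤ y * log y := by gcongr

theorem lemma1_step2_general {x : ℝ} (hx : 6 ≤ x) : log (x + 1) < log x ^ (1 + 1 / x) := by
  have hlog : 16 / 9 ≤ log x :=
    sixteen_div_nine_lt_log_six.le.trans (log_le_log (by norm_num) hx)
  exact log_add_one_lt_log_rpow_of_one_le_mul_log (by linarith)
    (one_lt_mul_log_of_sixteen_div_nine_le hlog).le

theorem lemma1_step2 (n : ℕ) (hn : 21 ≤ n) :
    Real.log ((n : ℝ) + 1) < (Real.log n) ^ (1 + 1 / (n : ℝ)) :=
  lemma1_step2_general (by exact_mod_cast (show 6 ≤ n by lia))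
end

section
/- For every natural number n ≥ 89, ((n+1)·(log(n+1) + log log(n+1) − 1/2))^{1/(n+1)} < (n·(log n + log log n − 1/2))^{1/n}. (Inequality (2.4).) -/
open Real

/-!
If `f x / x ^ p` is antitone and `exp p < f x`, then `f x ^ (1 / x)` is strictly antitone:
for `x < y` the hypotheses give
`x * log (f y) ≤ x * log (f x) + p * x * (log y - log x) ≤ x * log (f x) + p * (y - x)`,
and the right-hand side is less than `y * log (f x)`. This applies to
`f x = x * g x` with `g x = log x + log (log x) - c` and `p = 2`: the quotient `g x / x` is antitone
where `x * deriv g x = 1 + 1 / log x` is at most `g x`.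
-/

theorem log_sub_log_le_sub_div {x y : ℝ} (hx : 0 < x) (hy : 0 < y) :
    log y - log x ≤ (y - x) / x := by
  rw [← log_div hy.ne' hx.ne', sub_div, div_self hx.ne']
  exact log_le_sub_one_of_pos (div_pos hy hx)

theorem strictAntiOn_rpow_one_div_of_antitoneOn_div_rpow {f : ℝ → ℝ} {s : Set ℝ} {p : ℝ}
    (hp : 0 ≤ p) (hs : ∀ x ∈ s, 0 < x) (hf : ∀ x ∈ s, exp p < f x)
    (hanti : AntitoneOn (fun x ↦ f x / x ^ p) s) :
    StrictAntiOn (fun x ↦ f x ^ (1 / x)) s := by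
  intro x hxs y hys hxy
  have hx : 0 < x := hs x hxs
  have hy : 0 < y := hs y hys
  have hfx : 0 < f x := (exp_pos p).trans (hf x hxs)
  have hfy : 0 < f y := (exp_pos p).trans (hf y hys)
  have hp_lt : p < log (f x) := (lt_log_iff_exp_lt hfx).2 (hf x hxs)
  have hlog_div : log (f y) - p * log y ≤ log (f x) - p * log x := by
    rw [← log_rpow hx, ← log_rpow hy, ← log_div hfx.ne' (rpow_pos_of_pos hx p).ne',
      ← log_div hfy.ne' (rpow_pos_of_pos hy p).ne']
    exact log_le_log (div_pos hfy (rpow_pos_of_pos hy p)) (hanti hxs hys hxy.le)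
  have hlog_sub : (log y - log x) * x ≤ y - x :=
    (le_div_iff₀ hx).1 (log_sub_log_le_sub_div hx hy)
  have hlog_lt : log (f y) / y < log (f x) / x := by
    rw [div_lt_div_iff₀ hy hx]
    calc log (f y) * x ≤ (log (f x) + p * (log y - log x)) * x := by gcongr; linarith
      _ = log (f x) * x + p * ((log y - log x) * x) := by ring
      _ ≤ log (f x) * x + p * (y - x) := by gcongr
      _ < log (f x) * x + log (f x) * (y - x) := by gcongr
      _ = log (f x) * y := by ring
  simpa only [rpow_def_of_pos hfx, rpow_def_of_pos hfy, mul_one_div, exp_lt_exp] using hlog_lt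

/-- The approximation `log x + log (log x) - c` to the quotient `pₓ / x` of the `x`-th prime by
its index, as in Cipolla's expansion (where `c = 1`), extended to real `x`. -/
noncomputable def cipollaFactor (c x : ℝ) : ℝ :=
  log x + log (log x) - c

theorem cipollaFactor_sub_le {c x y : ℝ} (hx : 1 < x) (hy : 1 < y) :
    cipollaFactor c y - cipollaFactor c x ≤ (1 + 1 / log x) * ((y - x) / x) := by
  have hlogx : 0 < log x := log_pos hx
  calc cipollaFactor c y - cipollaFactor c x
      = (log y - log x) + (log (log y) - log (log x)) := by unfold cipollaFactor; ring
    _ ≤ (log y - log x) + (log y - log x) / log x := by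
        gcongr
        exact log_sub_log_le_sub_div hlogx (log_pos hy)
    _ = (1 + 1 / log x) * (log y - log x) := by ring
    _ ≤ (1 + 1 / log x) * ((y - x) / x) := by
        gcongr
        exact log_sub_log_le_sub_div (one_pos.trans hx) (one_pos.trans hy)

theorem one_add_one_div_log_le_cipollaFactor {c x : ℝ} (hc : c ≤ 1) (hx : exp 2 ≤ x) :
    1 + 1 / log x ≤ cipollaFactor c x := by
  have hlogx : 2 ≤ log x := (le_log_iff_exp_le ((exp_pos 2).trans_le hx)).2 hx
  have hinv : 1 / log x ≤ 1 / 2 := one_div_le_one_div_of_le two_pos hlogx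
  have hloglog : 1 - 1 / log x ≤ log (log x) := by
    simpa only [one_div] using one_sub_inv_le_log_of_pos (two_pos.trans_le hlogx)
  unfold cipollaFactor
  linarith

theorem one_lt_cipollaFactor {c x : ℝ} (hc : c ≤ 1) (hx : exp 2 ≤ x) :
    1 < cipollaFactor c x := by
  have hlogx : 0 < log x := log_pos ((one_lt_exp_iff.2 two_pos).trans_le hx)
  exact (lt_add_of_pos_right 1 (one_div_pos.2 hlogx)).trans_le
    (one_add_one_div_log_le_cipollaFactor hc hx)

theorem antitoneOn_cipollaFactor_div {c : ℝ} (hc : c ≤ 1) :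
    AntitoneOn (fun x ↦ cipollaFactor c x / x) (Set.Ici (exp 2)) := by
  intro x (hx : exp 2 ≤ x) y _ hxy
  have hx₁ : 1 < x := (one_lt_exp_iff.2 two_pos).trans_le hx
  have hx₀ : 0 < x := one_pos.trans hx₁
  refine (div_le_iff₀ (hx₀.trans_le hxy)).2 ?_
  calc cipollaFactor c y
      ≤ cipollaFactor c x + (1 + 1 / log x) * ((y - x) / x) :=
        sub_le_iff_le_add'.1 (cipollaFactor_sub_le hx₁ (hx₁.trans_le hxy))
    _ ≤ cipollaFactor c x + cipollaFactor c x * ((y - x) / x) := by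
        have : 0 ≤ (y - x) / x := div_nonneg (sub_nonneg.2 hxy) hx₀.le
        gcongr
        exact one_add_one_div_log_le_cipollaFactor hc hx
    _ = cipollaFactor c x / x * y := by field_simp; ring

theorem ineq_2_4_general {c : ℝ} (hc : c ≤ 1) :
    StrictAntiOn (fun x : ℝ ↦ (x * (log x + log (log x) - c)) ^ (1 / x)) (Set.Ici (exp 2)) := by
  have hpos : ∀ x ∈ Set.Ici (exp 2), 0 < x := fun x hx ↦ (exp_pos 2).trans_le hx
  refine strictAntiOn_rpow_one_div_of_antitoneOn_div_rpow (f := fun x ↦ x * cipollaFactor c x)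
    zero_le_two hpos (fun x hx ↦ ?_) ((antitoneOn_cipollaFactor_div hc).congr fun x hx ↦ ?_)
  · exact lt_of_le_of_lt hx (lt_mul_of_one_lt_right (hpos x hx) (one_lt_cipollaFactor hc hx))
  · have hx₀ : x ≠ 0 := (hpos x hx).ne'
    simp only [rpow_two]
    field_simp

theorem exp_two_lt_nine : exp 2 < 9 := by
  calc exp 2 = exp 1 ^ 2 := by rw [← exp_nat_mul]; norm_num
    _ < 3 ^ 2 := by gcongr; exact exp_one_lt_three
    _ = 9 := by norm_num

theorem ineq_2_4 (n : ℕ) (hn : 89 ≤ n) :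
    (((n : ℝ) + 1) * (Real.log ((n : ℝ) + 1) + Real.log (Real.log ((n : ℝ) + 1)) - 1 / 2))
        ^ ((1 : ℝ) / ((n : ℝ) + 1)) <
      ((n : ℝ) * (Real.log n + Real.log (Real.log n) - 1 / 2)) ^ ((1 : ℝ) / (n : ℝ)) := by
  have hn' : exp 2 ≤ n := exp_two_lt_nine.le.trans (by exact_mod_cast (by lia : 9 ≤ n))
  exact ineq_2_4_general (by norm_num) hn' (hn'.trans (lt_add_one _).le) (lt_add_one _)
end

section
/- For every natural number n ≥ 195340, ((n+1)·(log(n+1) + log log(n+1) − 3/2))^{1/(n+1)} < (n·(log n + log log n − 3/2))^{1/n}. (Inequality (2.5).) -/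
open Real

/-!
For positive `f`, the derivative of `log (f x) / x` has the sign of `x * f' x / f x - log (f x)`.
When `f x = x * g x` with `g x = log x + log (log x) - c`, writing `L = log x`, this is
`1 + (1 + 1 / L) / g x - (L + log (g x))`. If `L ≥ 5 / 2` and `g x ≥ 1`, it is at most
`1 + 7 / 5 - 5 / 2 < 0`, so `f x ^ (1 / x)` is strictly decreasing in the real variable `x`.
-/

theorem strictAntiOn_log_div_self {f f' : ℝ → ℝ} {s : Set ℝ} (hs : Convex ℝ s)
    (hs_pos : ∀ x ∈ s, 0 < x) (hf_pos : ∀ x ∈ s, 0 < f x) (hf_cont : ContinuousOn f s)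
    (hf_deriv : ∀ x ∈ interior s, HasDerivAt f (f' x) x)
    (hlt : ∀ x ∈ interior s, x * f' x < f x * log (f x)) :
    StrictAntiOn (fun x ↦ log (f x) / x) s := by
  refine strictAntiOn_of_hasDerivWithinAt_neg hs
    ((hf_cont.log fun x hx ↦ (hf_pos x hx).ne').div continuousOn_id fun x hx ↦ (hs_pos x hx).ne')
    (f' := fun x ↦ (f' x / f x * x - log (f x) * 1) / x ^ 2)
    (fun x hx ↦ ?_) (fun x hx ↦ ?_)
  · have hxs := interior_subset hx
    exact (((hf_deriv x hx).log (hf_pos x hxs).ne').div (hasDerivAt_id x)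
      (hs_pos x hxs).ne').hasDerivWithinAt
  · have hxs := interior_subset hx
    have hquot : f' x / f x * x < log (f x) := by
      rw [div_mul_eq_mul_div, div_lt_iff₀ (hf_pos x hxs)]
      linarith [hlt x hx]
    exact div_neg_of_neg_of_pos (by linarith) (pow_pos (hs_pos x hxs) 2)

theorem strictAntiOn_rpow_one_div {f f' : ℝ → ℝ} {s : Set ℝ} (hs : Convex ℝ s)
    (hs_pos : ∀ x ∈ s, 0 < x) (hf_pos : ∀ x ∈ s, 0 < f x) (hf_cont : ContinuousOn f s)
    (hf_deriv : ∀ x ∈ interior s, HasDerivAt f (f' x) x)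
    (hlt : ∀ x ∈ interior s, x * f' x < f x * log (f x)) :
    StrictAntiOn (fun x ↦ f x ^ (1 / x)) s :=
  (exp_strictMono.comp_strictAntiOn
    (strictAntiOn_log_div_self hs hs_pos hf_pos hf_cont hf_deriv hlt)).congr fun x hx ↦ by
      simp only [Function.comp_apply, rpow_def_of_pos (hf_pos x hx), mul_one_div]

/-- The factor `log x + log log x - c` in the classical approximations
`n * (log n + log log n - c)` to the `n`-th prime: `c = 1` gives the start of its asymptotic
expansion, and `c = 3 / 2` the lower bound of Rosser and Schoenfeld. -/
noncomputable def logAddLogLog (c x : ℝ) : ℝ :=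
  log x + log (log x) - c

section

variable {a c x : ℝ}

theorem hasDerivAt_logAddLogLog (hx : 1 < x) :
    HasDerivAt (logAddLogLog c) (x⁻¹ + x⁻¹ / log x) x := by
  have hlog := hasDerivAt_log (zero_lt_one.trans hx).ne'
  exact (hlog.add (hlog.log (log_pos hx).ne')).sub_const c

theorem hasDerivAt_mul_logAddLogLog (hx : 1 < x) :
    HasDerivAt (fun y ↦ y * logAddLogLog c y) (logAddLogLog c x + (1 + 1 / log x)) x := by
  have hx_ne : x ≠ 0 := (zero_lt_one.trans hx).ne'
  refine ((hasDerivAt_id x).mul (hasDerivAt_logAddLogLog hx)).congr_deriv ?_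
  simp only [id_eq]
  field_simp

theorem one_le_logAddLogLog (hx : 1 ≤ log x) (hc : c + 1 ≤ log x) : 1 ≤ logAddLogLog c x := by
  have hloglog : 0 ≤ log (log x) := log_nonneg hx
  unfold logAddLogLog
  linarith

theorem logAddLogLog_add_lt_mul_log (hx : 5 / 2 ≤ log x) (hc : c + 1 ≤ log x) :
    logAddLogLog c x + (1 + 1 / log x) < logAddLogLog c x * log (x * logAddLogLog c x) := by
  have hg : 1 ≤ logAddLogLog c x := one_le_logAddLogLog (by linarith) hc
  have hx_ne : x ≠ 0 := by
    rintro rfl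
    norm_num at hx
  have hinv : 1 / log x ≤ 2 / 5 := by
    rw [div_le_div_iff₀ (by linarith) (by norm_num)]
    linarith
  have hlog_mul : 5 / 2 ≤ log (x * logAddLogLog c x) := by
    rw [log_mul hx_ne (by linarith)]
    linarith [log_nonneg hg]
  calc logAddLogLog c x + (1 + 1 / log x)
      < logAddLogLog c x * (5 / 2) := by linarith
    _ ≤ logAddLogLog c x * log (x * logAddLogLog c x) := by gcongr

theorem ineq_2_5_general (ha : 5 / 2 ≤ a) (hca : c + 1 ≤ a) :
    StrictAntiOn (fun x ↦ (x * (log x + log (log x) - c)) ^ (1 / x)) (Set.Ici (exp a)) := by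
  have hpos : ∀ x ∈ Set.Ici (exp a), 0 < x := fun x hx ↦ (exp_pos a).trans_le hx
  have hlog : ∀ x ∈ Set.Ici (exp a), a ≤ log x := fun x hx ↦ (le_log_iff_exp_le (hpos x hx)).2 hx
  have hderiv : ∀ x ∈ Set.Ici (exp a), HasDerivAt (fun y ↦ y * logAddLogLog c y)
      (logAddLogLog c x + (1 + 1 / log x)) x := fun x hx ↦
    hasDerivAt_mul_logAddLogLog ((one_lt_exp_iff.2 (by linarith)).trans_le hx)
  refine strictAntiOn_rpow_one_div (f := fun y ↦ y * logAddLogLog c y) (convex_Ici _) hpos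
    (fun x hx ↦ ?_) (fun x hx ↦ (hderiv x hx).continuousAt.continuousWithinAt)
    (fun x hx ↦ hderiv x (interior_subset hx)) (fun x hx ↦ ?_)
  · have hg : 1 ≤ logAddLogLog c x :=
      one_le_logAddLogLog (by linarith [hlog x hx]) (hca.trans (hlog x hx))
    exact mul_pos (hpos x hx) (by linarith)
  · have hx_mem := interior_subset hx
    have hlt : logAddLogLog c x + (1 + 1 / log x) <
        logAddLogLog c x * log (x * logAddLogLog c x) :=
      logAddLogLog_add_lt_mul_log (ha.trans (hlog x hx_mem)) (hca.trans (hlog x hx_mem))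
    simpa only [mul_assoc] using mul_lt_mul_of_pos_left hlt (hpos x hx_mem)

end

theorem exp_five_halves_lt : exp (5 / 2) < 27 := by
  calc exp (5 / 2) < exp ((3 : ℕ) * 1) := exp_lt_exp.2 (by norm_num)
    _ = exp 1 ^ 3 := exp_nat_mul 1 3
    _ < 3 ^ 3 := by gcongr; exact exp_one_lt_three
    _ = 27 := by norm_num

theorem ineq_2_5 (n : ℕ) (hn : 195340 ≤ n) :
    (((n : ℝ) + 1) * (Real.log ((n : ℝ) + 1) + Real.log (Real.log ((n : ℝ) + 1)) - 3 / 2))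
        ^ ((1 : ℝ) / ((n : ℝ) + 1)) <
      ((n : ℝ) * (Real.log n + Real.log (Real.log n) - 3 / 2)) ^ ((1 : ℝ) / (n : ℝ)) := by
  have hn_mem : exp (5 / 2) ≤ (n : ℝ) :=
    exp_five_halves_lt.le.trans (by exact_mod_cast (by norm_num : 27 ≤ 195340).trans hn)
  exact ineq_2_5_general le_rfl (by norm_num) hn_mem (hn_mem.trans (lt_add_one _).le)
    (lt_add_one _)
end

section
/- For all natural numbers m, n with n ≥ 195340 and m ≥ 3n, (m·log m + m·log log m − m/2)^{1/m} < (n·log n + n·log log n − 3n/2)^{1/n}. (Inequality (3.12), equivalently the middle part of inequality (2.6).) -/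
open Real

/-!
With `x = n` and `y = m`, the left-hand base is less than `y ^ 2` and the right-hand base is at
least `x`, so it suffices that `(y ^ 2) ^ (1 / y) ≤ x ^ (1 / x)`. Since `log t / t`
decreases for `t ≥ e`, the worst case is `y = 3 * x`, where the claim becomes
`(3 * x) ^ 2 ≤ x ^ 3`, that is, `9 ≤ x`.
-/

theorem log_add_log_log_lt_self {x : ℝ} (hx : 1 < x) : log x + log (log x) < x := by
  have hlog : 0 < log x := log_pos hx
  have hloglog : log (log x) < log x := by linarith [log_le_sub_one_of_pos hlog]
  have he : 2 < exp 1 := exp_one_gt_two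
  calc log x + log (log x) < 2 * log x := by linarith
    _ ≤ exp 1 * log x := by gcongr
    _ ≤ exp (log x) := exp_one_mul_le_exp
    _ = x := exp_log (by linarith)

theorem five_halves_lt_log_add_log_log {x : ℝ} (hx : exp 2 ≤ x) :
    5 / 2 < log x + log (log x) := by
  have hlog : 2 ≤ log x := (le_log_iff_exp_le ((exp_pos 2).trans_le hx)).mpr hx
  have hloglog : log 2 ≤ log (log x) := log_le_log two_pos hlog
  linarith [log_two_gt_d9]

theorem rpow_div_self_le_rpow_one_div_self {k p x y : ℝ} (hp : 0 ≤ p) (hx : 0 < x)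
    (hkx : exp 1 ≤ k * x) (hy : k * x ≤ y) (hpow : (k * x) ^ p ≤ x ^ k) :
    y ^ (p / y) ≤ x ^ (1 / x) := by
  have hkx₀ : 0 < k * x := (exp_pos 1).trans_le hkx
  have hk : 0 < k := pos_of_mul_pos_left hkx₀ hx.le
  have hlog_div : log y / y ≤ log (k * x) / (k * x) :=
    log_div_self_antitoneOn hkx (hkx.trans hy) hy
  have hlog_pow : p * log (k * x) ≤ k * log x := by
    rw [← log_rpow hkx₀, ← log_rpow hx]
    exact log_le_log (rpow_pos_of_pos hkx₀ p) hpow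
  rw [rpow_def_of_pos (hkx₀.trans_le hy), rpow_def_of_pos hx, exp_le_exp]
  calc log y * (p / y) = p * (log y / y) := by ring
    _ ≤ p * (log (k * x) / (k * x)) := by gcongr
    _ = p * log (k * x) / (k * x) := by ring
    _ ≤ k * log x / (k * x) := by gcongr
    _ = log x * (1 / x) := by field_simp

theorem sq_rpow_one_div_self_le_of_three_mul_le {x y : ℝ} (hx : 9 ≤ x) (hy : 3 * x ≤ y) :
    (y ^ 2) ^ (1 / y) ≤ x ^ (1 / x) := by
  have hpow : (3 * x) ^ (2 : ℝ) ≤ x ^ (3 : ℝ) := by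
    norm_cast
    calc (3 * x) ^ 2 = 9 * x ^ 2 := by ring
      _ ≤ x * x ^ 2 := by gcongr
      _ = x ^ 3 := by ring
  have he : exp 1 ≤ 3 * x := by linarith [exp_one_lt_three]
  calc (y ^ 2) ^ (1 / y) = y ^ (2 / y) := by
        rw [← rpow_two, ← rpow_mul (by linarith), mul_one_div]
    _ ≤ x ^ (1 / x) :=
        rpow_div_self_le_rpow_one_div_self zero_le_two (by linarith) he hy hpow

theorem ineq_3_12_general {x y : ℝ} (hx : 9 ≤ x) (hy : 3 * x ≤ y) :
    (y * log y + y * log (log y) - y / 2) ^ (1 / y) <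
      (x * log x + x * log (log x) - 3 * x / 2) ^ (1 / x) := by
  have hx₀ : 0 < x := by linarith
  have hy₀ : 0 < y := by linarith
  have hlower {t : ℝ} (ht : 9 ≤ t) : t ≤ t * log t + t * log (log t) - 3 * t / 2 := by
    nlinarith [five_halves_lt_log_add_log_log (exp_two_lt_nine.le.trans ht)]
  have hupper : y * log y + y * log (log y) - y / 2 < y ^ 2 := by
    nlinarith [log_add_log_log_lt_self (show 1 < y by linarith)]
  have hnonneg : 0 ≤ y * log y + y * log (log y) - y / 2 := by
    linarith [hlower (show 9 ≤ y by linarith)]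
  calc (y * log y + y * log (log y) - y / 2) ^ (1 / y)
      < (y ^ 2) ^ (1 / y) := rpow_lt_rpow hnonneg hupper (by positivity)
    _ ≤ x ^ (1 / x) := sq_rpow_one_div_self_le_of_three_mul_le hx hy
    _ ≤ (x * log x + x * log (log x) - 3 * x / 2) ^ (1 / x) :=
        rpow_le_rpow hx₀.le (hlower hx) (by positivity)

theorem ineq_3_12 (m n : ℕ) (hn : 195340 ≤ n) (hm : 3 * n ≤ m) :
    ((m : ℝ) * Real.log m + (m : ℝ) * Real.log (Real.log m) - (m : ℝ) / 2)
        ^ ((1 : ℝ) / (m : ℝ)) <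
      ((n : ℝ) * Real.log n + (n : ℝ) * Real.log (Real.log n) - 3 * (n : ℝ) / 2)
        ^ ((1 : ℝ) / (n : ℝ)) :=
  ineq_3_12_general (by exact_mod_cast (show 9 ≤ n by lia)) (by exact_mod_cast hm)
end

section
/- For all natural numbers m, n with n ≥ 195340 and m ≥ 3n, p_m^{1/m} < p_n^{1/n}. (Consequence of inequality (2.6).) -/
open Real

/-!
Chebyshev's lower bound for the prime counting function gives `p_m ≤ m ^ (7 / 4)` for `m ≥ 16`,
and the values `2 ≤ m < 16` are checked directly. Since `x ^ (1 / x)` is decreasing on `[e, ∞)`,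
for `m ≥ 3 * n` and `n ≥ 1` this yields
`p_m ^ (1 / m) ≤ (m ^ (1 / m)) ^ (7 / 4) ≤ ((3 * n) ^ (7 / 12)) ^ (1 / n)`,
and `(3 * n) ^ (7 / 12) < n + 1 ≤ p_n`. The exponent `7 / 4` is small enough for the last inequality
to hold for every `n`, and large enough for Chebyshev's bound to apply from `m = 16` on.
-/

theorem lt_nthPrime (n : ℕ) : n < nthPrime n := by
  have := Nat.add_two_le_nth_prime (n - 1)
  unfold nthPrime
  lia

theorem nthPrime_le_of_le_primeCounting {n x : ℕ} (hn : n ≠ 0) (h : n ≤ x.primeCounting) :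
    nthPrime n ≤ x :=
  Nat.lt_succ_iff.mp <| Nat.nth_lt_of_lt_count <| (Nat.sub_one_lt hn).trans_le h

theorem two_mul_mul_log_le_log_two_mul_rpow {x : ℝ} (hx : 16 ≤ x) :
    2 * (x * log x) ≤ log 2 * x ^ (7 / 4 : ℝ) := by
  have hx0 : 0 < x := by linarith
  have sixteen_eq : (16 : ℝ) = 2 ^ 4 := by norm_num
  have log_sixteen : log 16 = 4 * log 2 := by rw [sixteen_eq, log_pow]; norm_num
  have sixteen_rpow : (16 : ℝ) ^ (3 / 4 : ℝ) = 8 := by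
    rw [sixteen_eq, ← rpow_natCast_mul (by norm_num)]; norm_num
  have exp_le : exp (3 / 4 : ℝ)⁻¹ ≤ 16 := by
    rw [← le_log_iff_exp_le (by norm_num), log_sixteen]
    linarith [log_two_gt_d9]
  have log_sixteen_div : log 16 / 16 ^ (3 / 4 : ℝ) = log 2 / 2 := by
    rw [log_sixteen, sixteen_rpow]; ring
  have log_le : log x ≤ log 2 / 2 * x ^ (3 / 4 : ℝ) := by
    rw [← div_le_iff₀ (by positivity), ← log_sixteen_div]
    exact log_div_self_rpow_antitoneOn (by norm_num) exp_le (exp_le.trans hx) hx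
  calc 2 * (x * log x) ≤ 2 * (x * (log 2 / 2 * x ^ (3 / 4 : ℝ))) := by gcongr
    _ = log 2 * (x * x ^ (3 / 4 : ℝ)) := by ring
    _ = log 2 * x ^ (7 / 4 : ℝ) := by rw [← rpow_one_add' hx0.le (by norm_num)]; norm_num

theorem le_primeCounting_floor_rpow {x : ℝ} (hx : 16 ≤ x) :
    x ≤ Nat.primeCounting ⌊x ^ (7 / 4 : ℝ)⌋₊ := by
  have hx0 : 0 < x := by linarith
  have log_x_pos : 0 < log x := log_pos (by linarith)
  have one_lt_x_rpow : 1 < x ^ (7 / 4 : ℝ) := one_lt_rpow (by linarith) (by norm_num)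
  have log_rpow_add_two_le : log (x ^ (7 / 4 : ℝ) + 2) ≤ 3 * log x := calc
    log (x ^ (7 / 4 : ℝ) + 2) ≤ log (x ^ 3) := by
      have rpow_le_sq : x ^ (7 / 4 : ℝ) ≤ x ^ 2 := by
        rw [← rpow_two]
        exact rpow_le_rpow_of_exponent_le (by linarith) (by norm_num)
      gcongr
      nlinarith
    _ = 3 * log x := by simp
  refine le_trans ?_ (Chebyshev.pi_ge' one_lt_x_rpow)
  rw [log_rpow hx0, le_div_iff₀ (by positivity)]
  have log_two_le : log 2 ≤ log x := log_le_log two_pos (by linarith)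
  have sixteen_mul_log_le : 16 * log x ≤ x * log x := by gcongr
  linarith [two_mul_mul_log_le_log_two_mul_rpow hx]

theorem nthPrime_le_rpow {m : ℕ} (hm : 2 ≤ m) : (nthPrime m : ℝ) ≤ (m : ℝ) ^ (7 / 4 : ℝ) := by
  have hm0 : m ≠ 0 := by lia
  rcases le_or_gt 16 m with large | small
  · rw [← Nat.le_floor_iff (by positivity)]
    refine nthPrime_le_of_le_primeCounting hm0 ?_
    exact_mod_cast le_primeCounting_floor_rpow (x := m) (by exact_mod_cast large)
  · have small_values : ∀ k < 16, 2 ≤ k → ∃ x < 50, k ≤ x.primeCounting ∧ x ^ 4 ≤ k ^ 7 := by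
      decide +kernel
    obtain ⟨x, -, hmx, hx⟩ := small_values m small hm
    calc (nthPrime m : ℝ) ≤ x := by exact_mod_cast nthPrime_le_of_le_primeCounting hm0 hmx
      _ = ((x : ℝ) ^ 4) ^ (1 / 4 : ℝ) := by rw [← rpow_natCast_mul (by positivity)]; norm_num
      _ ≤ ((m : ℝ) ^ 7) ^ (1 / 4 : ℝ) := by gcongr; exact_mod_cast hx
      _ = (m : ℝ) ^ (7 / 4 : ℝ) := by rw [← rpow_natCast_mul (by positivity)]; norm_num

theorem rpow_one_div_self_antitoneOn :
    AntitoneOn (fun x : ℝ ↦ x ^ (1 / x)) (Set.Ici (exp 1)) := by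
  intro x hx y hy hxy
  have hx0 : 0 < x := (exp_pos 1).trans_le hx
  have hy0 : 0 < y := hx0.trans_le hxy
  simp only [rpow_def_of_pos hx0, rpow_def_of_pos hy0, mul_one_div]
  exact exp_le_exp.mpr (log_div_self_antitoneOn hx hy hxy)

theorem three_mul_pow_seven_lt_add_one_pow_twelve (n : ℕ) : (3 * n) ^ 7 < (n + 1) ^ 12 := by
  rcases lt_or_ge n 4 with small | large
  · decide +revert
  · calc (3 * n) ^ 7 = 3 ^ 7 * n ^ 7 := mul_pow ..
      _ < (n + 1) ^ 5 * (n + 1) ^ 7 := by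
        have : 3 ^ 7 < (n + 1) ^ 5 := calc
          3 ^ 7 < (4 + 1) ^ 5 := by norm_num
          _ ≤ (n + 1) ^ 5 := by gcongr
        gcongr
        lia
      _ = (n + 1) ^ 12 := by ring

theorem three_mul_rpow_lt_nthPrime (n : ℕ) : (3 * n : ℝ) ^ (7 / 12 : ℝ) < nthPrime n := by
  calc (3 * n : ℝ) ^ (7 / 12 : ℝ) = ((3 * n : ℝ) ^ 7) ^ (1 / 12 : ℝ) := by
        rw [← rpow_natCast_mul (by positivity)]; norm_num
    _ < ((n + 1 : ℝ) ^ 12) ^ (1 / 12 : ℝ) := by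
        gcongr; exact_mod_cast three_mul_pow_seven_lt_add_one_pow_twelve n
    _ = n + 1 := by rw [← rpow_natCast_mul (by positivity)]; norm_num
    _ ≤ nthPrime n := by exact_mod_cast lt_nthPrime n

theorem ineq_2_6_consequence_general {m n : ℕ} (hn : n ≠ 0) (hm : 3 * n ≤ m) :
    (nthPrime m : ℝ) ^ ((1 : ℝ) / m) < (nthPrime n : ℝ) ^ ((1 : ℝ) / n) := by
  have hn1 : (1 : ℝ) ≤ n := by exact_mod_cast Nat.one_le_iff_ne_zero.mpr hn
  have hm' : 3 * (n : ℝ) ≤ m := by exact_mod_cast hm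
  have exp_one_le : exp 1 ≤ 3 * n := by linarith [exp_one_lt_three]
  calc (nthPrime m : ℝ) ^ (1 / m : ℝ) ≤ ((m : ℝ) ^ (7 / 4 : ℝ)) ^ (1 / m : ℝ) := by
        gcongr; exact nthPrime_le_rpow (by lia)
    _ = ((m : ℝ) ^ (1 / m : ℝ)) ^ (7 / 4 : ℝ) := by
        rw [← rpow_mul (by positivity), ← rpow_mul (by positivity), mul_comm]
    _ ≤ ((3 * n : ℝ) ^ (1 / (3 * n) : ℝ)) ^ (7 / 4 : ℝ) := by
        gcongr; exact rpow_one_div_self_antitoneOn exp_one_le (exp_one_le.trans hm') hm'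
    _ = ((3 * n : ℝ) ^ (7 / 12 : ℝ)) ^ (1 / n : ℝ) := by
        rw [← rpow_mul (by positivity), ← rpow_mul (by positivity)]; congr 1; ring
    _ < (nthPrime n : ℝ) ^ (1 / n : ℝ) := by
        gcongr; exact three_mul_rpow_lt_nthPrime n

theorem ineq_2_6_consequence (m n : ℕ) (hn : 195340 ≤ n) (hm : 3 * n ≤ m) :
    (nthPrime m : ℝ) ^ ((1 : ℝ) / m) < (nthPrime n : ℝ) ^ ((1 : ℝ) / n) := by
  exact ineq_2_6_consequence_general (by lia) hm
end

section
/- For every natural number n ≥ 89, (n+1)^n·(log(n+1) + log log(n+1) − 1/2)^n < n^{n+1}·(log n + log log n − 1/2)^{n+1}. (Inequality (3.1).) -/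
open Real

/-!
Write `φ x = log x + log (log x) - 1 / 2`. Concavity of `log` gives `φ (x + 1) ≤ φ x + c / x` with
`c = 1 + 1 / log x`, so `(φ (x + 1) / φ x) ^ x ≤ exp (c / φ x)`, and likewise
`((x + 1) / x) ^ x ≤ exp 1`. It remains to compare `exp (1 + c / φ x)` with the extra factor
`x * φ x` on the right: the former decreases in `x`, the latter increases, and the former is already
smaller at `x = 5`.
-/

lemma rpow_le_rpow_mul_exp_of_le_add_div {x a b c : ℝ} (hx : 0 < x) (ha : 0 < a) (hb : 0 ≤ b)
    (hab : b ≤ a + c / x) : b ^ x ≤ a ^ x * exp (c / a) := by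
  have hb_exp : b ≤ a * exp (c / a / x) :=
    calc b ≤ a + c / x := hab
      _ = a * (c / a / x + 1) := by field_simp; ring
      _ ≤ a * exp (c / a / x) := by gcongr; exact add_one_le_exp _
  calc b ^ x ≤ (a * exp (c / a / x)) ^ x := by gcongr
    _ = a ^ x * exp (c / a) := by
      rw [mul_rpow ha.le (exp_pos _).le, ← exp_mul, div_mul_cancel₀ _ hx.ne']

lemma add_one_rpow_mul_rpow_lt_of_le_add_div {x a b c : ℝ} (hx : 0 < x) (ha : 0 < a) (hb : 0 ≤ b)
    (hab : b ≤ a + c / x) (hexp : exp (1 + c / a) < x * a) :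
    (x + 1) ^ x * b ^ x < x ^ (x + 1) * a ^ (x + 1) := by
  have h_base : (x + 1) ^ x ≤ x ^ x * exp 1 := by
    simpa [div_self hx.ne'] using
      rpow_le_rpow_mul_exp_of_le_add_div (b := x + 1) (c := x) hx hx (by positivity)
        (by rw [div_self hx.ne'])
  have h_factor : b ^ x ≤ a ^ x * exp (c / a) := rpow_le_rpow_mul_exp_of_le_add_div hx ha hb hab
  calc (x + 1) ^ x * b ^ x ≤ (x ^ x * exp 1) * (a ^ x * exp (c / a)) := by gcongr
    _ = x ^ x * a ^ x * exp (1 + c / a) := by rw [exp_add]; ring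
    _ < x ^ x * a ^ x * (x * a) := by gcongr
    _ = x ^ (x + 1) * a ^ (x + 1) := by rw [rpow_add_one hx.ne', rpow_add_one ha.ne']; ring

lemma log_add_le_log_add_div {y h : ℝ} (hy : 0 < y) (hyh : 0 < y + h) :
    log (y + h) ≤ log y + h / y := by
  have h_tangent : log ((y + h) / y) ≤ (y + h) / y - 1 := log_le_sub_one_of_pos (by positivity)
  rw [log_div hyh.ne' hy.ne', add_div, div_self hy.ne'] at h_tangent
  linarith

lemma log_log_add_one_le {x : ℝ} (hx : 1 < x) :
    log (log (x + 1)) ≤ log (log x) + 1 / x / log x := by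
  have hlog : 0 < log x := log_pos hx
  calc log (log (x + 1)) ≤ log (log x + 1 / x) :=
        log_le_log (log_pos (by linarith)) (log_add_le_log_add_div (by linarith) (by linarith))
    _ ≤ log (log x) + 1 / x / log x := log_add_le_log_add_div hlog (by positivity)

lemma log_add_log_log_add_one_le {x : ℝ} (hx : 1 < x) :
    log (x + 1) + log (log (x + 1)) ≤ log x + log (log x) + (1 + 1 / log x) / x := by
  have h_log : log (x + 1) ≤ log x + 1 / x := log_add_le_log_add_div (by linarith) (by linarith)
  calc log (x + 1) + log (log (x + 1))
      ≤ (log x + 1 / x) + (log (log x) + 1 / x / log x) := add_le_add h_log (log_log_add_one_le hx)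
    _ = log x + log (log x) + (1 + 1 / log x) / x := by ring

lemma log_ge_eight_fifths {x : ℝ} (hx : 5 ≤ x) : 8 / 5 ≤ log x := by
  have h_mono : log 5 ≤ log x := log_le_log (by norm_num) hx
  linarith [log_five_gt_d9]

lemma log_add_log_log_sub_half_ge {x : ℝ} (hx : 5 ≤ x) :
    25 / 16 ≤ log x + log (log x) - 1 / 2 := by
  have h_log : 8 / 5 ≤ log x := log_ge_eight_fifths hx
  have h_loglog : log (8 / 5) ≤ log (log x) := log_le_log (by norm_num) h_log
  have h_split : log (8 / 5) = 3 * log 2 - log 5 := by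
    rw [log_div (by norm_num) (by norm_num), show (8 : ℝ) = 2 ^ 3 by norm_num, log_pow]
    norm_num
  linarith [log_two_gt_d9, log_five_lt_d9]

lemma exp_fiftyone_div_twentyfive_lt : exp (51 / 25) < 125 / 16 := by
  rw [← lt_log_iff_exp_lt (by norm_num)]
  have h_split : log (125 / 16) = 3 * log 5 - 4 * log 2 := by
    rw [log_div (by norm_num) (by norm_num), show (125 : ℝ) = 5 ^ 3 by norm_num,
      show (16 : ℝ) = 2 ^ 4 by norm_num, log_pow, log_pow]
    norm_num
  linarith [log_two_lt_d9, log_five_gt_d9]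

lemma exp_one_add_div_lt_mul {x : ℝ} (hx : 5 ≤ x) :
    exp (1 + (1 + 1 / log x) / (log x + log (log x) - 1 / 2)) <
      x * (log x + log (log x) - 1 / 2) := by
  have h_log : 8 / 5 ≤ log x := log_ge_eight_fifths hx
  have h_factor : 25 / 16 ≤ log x + log (log x) - 1 / 2 := log_add_log_log_sub_half_ge hx
  calc exp (1 + (1 + 1 / log x) / (log x + log (log x) - 1 / 2))
      ≤ exp (1 + (1 + 1 / (8 / 5)) / (25 / 16)) := by gcongr
    _ = exp (51 / 25) := by norm_num
    _ < 5 * (25 / 16) := exp_fiftyone_div_twentyfive_lt.trans_eq (by norm_num)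
    _ ≤ x * (log x + log (log x) - 1 / 2) := by gcongr

theorem ineq_3_1_general (x : ℝ) (hx : 5 ≤ x) :
    (x + 1) ^ x * (log (x + 1) + log (log (x + 1)) - 1 / 2) ^ x <
      x ^ (x + 1) * (log x + log (log x) - 1 / 2) ^ (x + 1) := by
  have h_factor : 25 / 16 ≤ log x + log (log x) - 1 / 2 := log_add_log_log_sub_half_ge hx
  have h_factor_succ : 25 / 16 ≤ log (x + 1) + log (log (x + 1)) - 1 / 2 :=
    log_add_log_log_sub_half_ge (by linarith)
  have h_increment := log_add_log_log_add_one_le (x := x) (by linarith)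
  exact add_one_rpow_mul_rpow_lt_of_le_add_div (by linarith) (by linarith) (by linarith)
    (by linarith) (exp_one_add_div_lt_mul hx)

theorem ineq_3_1 (n : ℕ) (hn : 89 ≤ n) :
    ((n : ℝ) + 1) ^ n * (Real.log ((n : ℝ) + 1) + Real.log (Real.log ((n : ℝ) + 1)) - 1 / 2) ^ n <
      (n : ℝ) ^ (n + 1) * (Real.log n + Real.log (Real.log n) - 1 / 2) ^ (n + 1) := by
  have h_real := ineq_3_1_general n (by exact_mod_cast (show 5 ≤ n by omega))
  exact_mod_cast h_real
end

section
/- For every natural number n ≥ 89 and every natural number i with 1 ≤ i ≤ n, (log(n+1))^{n−(i−1)}·(log log(n+1) − 1/2)^{i−1} < (log n)^{n+1−(i−1)}·(log log n − 1/2)^{i−1}. (Inequality (3.3).) -/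
open Real

/-!
Put `L = log n`, and replace the shift `1 / 2` by a real number `a`. By concavity of the logarithm,
passing from `n` to `n + 1` raises `log n` by at most `1 / n` and `log log n` by at most
`1 / (n L)`. Hence each of the `n` factors on the left is at most `1 + s / (n L)` times the
corresponding factor on the right as soon as `s ≥ 1` and `s (log log n - a) ≥ 1`. The accumulated
loss is at most `exp (s / L)`, and the extra factor `L` on the right absorbs it when `s < L log L`.
For `a ≤ 1 / 2` and `n ≥ 16 > exp (exp 1)` one can take `s = 2`.
-/

theorem log_le_log_add_sub_div {x y : ℝ} (hx : 0 < x) (hy : 0 < y) :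
    log y ≤ log x + (y - x) / x := by
  have tangent_at_one : log (y / x) ≤ y / x - 1 := log_le_sub_one_of_pos (div_pos hy hx)
  rw [log_div hy.ne' hx.ne'] at tangent_at_one
  rw [sub_div, div_self hx.ne']
  linarith

theorem log_add_one_le_log_add_one_div {x : ℝ} (hx : 0 < x) : log (x + 1) ≤ log x + 1 / x := by
  simpa using log_le_log_add_sub_div hx (by positivity : 0 < x + 1)

theorem log_log_add_one_le_log_log_add_one_div {x : ℝ} (hx : 1 < x) :
    log (log (x + 1)) ≤ log (log x) + 1 / (x * log x) := by
  have log_x_pos : 0 < log x := log_pos hx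
  have log_add_one_pos : 0 < log (x + 1) := log_pos (by linarith)
  calc
    log (log (x + 1)) ≤ log (log x) + (log (x + 1) - log x) / log x :=
      log_le_log_add_sub_div log_x_pos log_add_one_pos
    _ ≤ log (log x) + 1 / x / log x := by
      gcongr
      linarith [log_add_one_le_log_add_one_div (by linarith : 0 < x)]
    _ = log (log x) + 1 / (x * log x) := by rw [div_div]

theorem log_add_one_le_log_mul {x s : ℝ} (hx : 1 < x) (hs : 1 ≤ s) :
    log (x + 1) ≤ log x * (1 + s / (x * log x)) := by
  have log_x_pos : 0 < log x := log_pos hx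
  calc
    log (x + 1) ≤ log x + 1 / x := log_add_one_le_log_add_one_div (by linarith)
    _ ≤ log x + s / x := by gcongr
    _ = log x * (1 + s / (x * log x)) := by field_simp

theorem log_log_add_one_sub_le_mul {x s a : ℝ} (hx : 1 < x) (hs : 1 ≤ s * (log (log x) - a)) :
    log (log (x + 1)) - a ≤ (log (log x) - a) * (1 + s / (x * log x)) := by
  have log_x_pos : 0 < log x := log_pos hx
  calc
    log (log (x + 1)) - a ≤ log (log x) - a + 1 / (x * log x) := by
      linarith [log_log_add_one_le_log_log_add_one_div hx]
    _ ≤ log (log x) - a + s * (log (log x) - a) / (x * log x) := by gcongr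
    _ = (log (log x) - a) * (1 + s / (x * log x)) := by ring

theorem pow_sub_mul_pow_le_mul_pow {R : Type*} [CommSemiring R] [PartialOrder R]
    [IsOrderedRing R] {x x' y y' c : R} {n j : ℕ} (hx' : 0 ≤ x') (hy' : 0 ≤ y')
    (hx : x' ≤ x * c) (hy : y' ≤ y * c) (hj : j ≤ n) :
    x' ^ (n - j) * y' ^ j ≤ x ^ (n - j) * y ^ j * c ^ n := by
  calc
    x' ^ (n - j) * y' ^ j ≤ (x * c) ^ (n - j) * (y * c) ^ j :=
      mul_le_mul (pow_le_pow_left₀ hx' hx _) (pow_le_pow_left₀ hy' hy _) (pow_nonneg hy' _)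
        (pow_nonneg (hx'.trans hx) _)
    _ = x ^ (n - j) * y ^ j * (c ^ (n - j) * c ^ j) := by ring
    _ = x ^ (n - j) * y ^ j * c ^ n := by rw [pow_sub_mul_pow c hj]

theorem one_add_div_mul_log_pow_lt_log {n : ℕ} {s : ℝ} (hn : 1 < n) (hs : 0 ≤ s)
    (hsn : s < log n * log (log n)) : (1 + s / (n * log n)) ^ n < log n := by
  have log_n_pos : 0 < log (n : ℝ) := log_pos (by exact_mod_cast hn)
  calc
    (1 + s / (n * log n)) ^ n ≤ exp (s / (n * log n)) ^ n := by
      gcongr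
      linarith [add_one_le_exp (s / (n * log n))]
    _ = exp (s / log n) := by
      rw [← exp_nat_mul]
      congr 1
      field_simp
    _ < log n := by
      rwa [← lt_log_iff_exp_lt log_n_pos, div_lt_iff₀' log_n_pos]

theorem log_add_one_pow_mul_log_log_sub_pow_lt {n j : ℕ} {s a : ℝ} (hn : 1 < n) (hj : j ≤ n)
    (hs : 1 ≤ s) (hsa : 1 ≤ s * (log (log n) - a)) (hsn : s < log n * log (log n)) :
    log ((n : ℝ) + 1) ^ (n - j) * (log (log ((n : ℝ) + 1)) - a) ^ j <
      log n ^ (n + 1 - j) * (log (log n) - a) ^ j := by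
  have one_lt_n : (1 : ℝ) < n := by exact_mod_cast hn
  have log_n_pos : 0 < log (n : ℝ) := log_pos one_lt_n
  have log_log_sub_pos : 0 < log (log n) - a :=
    pos_of_mul_pos_right (by linarith) (by linarith : 0 ≤ s)
  have log_le : log (n : ℝ) ≤ log ((n : ℝ) + 1) := log_le_log (by linarith) (by linarith)
  have log_log_add_one_sub_nonneg : 0 ≤ log (log ((n : ℝ) + 1)) - a := by
    linarith [log_le_log log_n_pos log_le]
  calc
    log ((n : ℝ) + 1) ^ (n - j) * (log (log ((n : ℝ) + 1)) - a) ^ j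
        ≤ log n ^ (n - j) * (log (log n) - a) ^ j * (1 + s / (n * log n)) ^ n :=
      pow_sub_mul_pow_le_mul_pow (by linarith) log_log_add_one_sub_nonneg
        (log_add_one_le_log_mul one_lt_n hs) (log_log_add_one_sub_le_mul one_lt_n hsa) hj
    _ < log n ^ (n - j) * (log (log n) - a) ^ j * log n := by
      gcongr
      exact one_add_div_mul_log_pow_lt_log hn (by linarith) hsn
    _ = log n ^ (n + 1 - j) * (log (log n) - a) ^ j := by
      rw [Nat.sub_add_comm hj, pow_succ]
      ring

theorem exp_one_lt_log_sixteen : exp 1 < log 16 := by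
  have log_sixteen : log 16 = 4 * log 2 := by
    rw [show (16 : ℝ) = 2 ^ 4 by norm_num, log_pow]
    norm_num
  linarith [exp_one_lt_d9, log_two_gt_d9]

theorem ineq_3_3_general {n j : ℕ} {a : ℝ} (ha : a ≤ 1 / 2) (hn : 16 ≤ n) (hj : j ≤ n) :
    log ((n : ℝ) + 1) ^ (n - j) * (log (log ((n : ℝ) + 1)) - a) ^ j <
      log n ^ (n + 1 - j) * (log (log n) - a) ^ j := by
  have exp_one_le_log : exp 1 ≤ log n :=
    exp_one_lt_log_sixteen.le.trans (log_le_log (by norm_num) (by exact_mod_cast hn))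
  have two_lt_log : 2 < log (n : ℝ) := by linarith [exp_one_gt_d9]
  have one_le_log_log : 1 ≤ log (log n) :=
    (le_log_iff_exp_le (by linarith)).2 exp_one_le_log
  exact log_add_one_pow_mul_log_log_sub_pow_lt (s := 2) (by lia) hj one_le_two (by linarith)
    (by nlinarith)

theorem ineq_3_3 (n i : ℕ) (hn : 89 ≤ n) (hi1 : 1 ≤ i) (hi2 : i ≤ n) :
    (Real.log ((n : ℝ) + 1)) ^ (n - (i - 1)) *
        (Real.log (Real.log ((n : ℝ) + 1)) - 1 / 2) ^ (i - 1) <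
      (Real.log n) ^ (n + 1 - (i - 1)) * (Real.log (Real.log n) - 1 / 2) ^ (i - 1) :=
  ineq_3_3_general le_rfl (by lia) (by lia)
end

section
/- For every natural number n ≥ 195340, 3n·log(3n) + 3n·log log(3n) − 3n/2 < (n·log n + n·log log n − 3n/2)^3. (Inequality (3.14).) -/
open Real

/-!
The left-hand side is `y (log y + log log y - 1/2)` at `y = 3x`; bounding both logarithms by tangent
lines makes it at most quadratic in `x`. On the right, `log x + log log x - 3/2` is bounded below by
a positive constant, so the cube is at least a multiple of `x ^ 3`. The cubic
already dominates for `x ≥ 6`, whereas the inequality is false at `x = 5`.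
-/

lemma log_le_div_exp_add_sub_one (a : ℝ) {y : ℝ} (hy : 0 < y) :
    log y ≤ y / exp a + a - 1 := by
  have h_tangent : log (y / exp a) ≤ y / exp a - 1 := log_le_sub_one_of_pos (by positivity)
  rw [log_div hy.ne' (exp_ne_zero a), log_exp] at h_tangent
  linarith

lemma div_le_log_of_exp_one_pow_le {p q : ℕ} (hq : 0 < q) {x : ℝ} (hx : 0 < x)
    (h : exp 1 ^ p ≤ x ^ q) : (p / q : ℝ) ≤ log x := by
  rw [div_le_iff₀' (by exact_mod_cast hq), ← log_pow, le_log_iff_exp_le (by positivity)]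
  rwa [← exp_one_pow]

lemma seven_lt_exp_two : 7 < exp 2 :=
  calc (7 : ℝ) < 2.7 ^ 2 := by norm_num
    _ ≤ exp 1 ^ 2 := by
      gcongr
      linarith [exp_one_gt_d9]
    _ = exp 2 := by simp [exp_one_pow]

lemma mul_log_add_mul_log_log_sub_half_le {y : ℝ} (hy : 1 < y) :
    y * log y + y * log (log y) - y / 2 ≤ 2 / 7 * y ^ 2 + y / 2 := by
  have hy₀ : 0 < y := by linarith
  have h_log_log : log (log y) ≤ log y - 1 := log_le_sub_one_of_pos (log_pos hy)
  have h_log : log y ≤ y / 7 + 1 :=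
    calc log y ≤ y / exp 2 + 2 - 1 := log_le_div_exp_add_sub_one 2 hy₀
      _ ≤ y / 7 + 2 - 1 := by
        gcongr
        exact seven_lt_exp_two.le
      _ = y / 7 + 1 := by ring
  calc y * log y + y * log (log y) - y / 2 = y * (log y + log (log y) - 1 / 2) := by ring
    _ ≤ y * (2 / 7 * y + 1 / 2) := by
      gcongr
      linarith
    _ = 2 / 7 * y ^ 2 + y / 2 := by ring

lemma le_log_add_log_log_of_six_le {x : ℝ} (hx : 6 ≤ x) :
    23 / 10 ≤ log x + log (log x) := by
  have exp_one_pow_le (k : ℕ) : exp 1 ^ k ≤ 2.7182818286 ^ k := by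
    gcongr
    exact exp_one_lt_d9.le
  have h_log_six : 7 / 4 ≤ log 6 := mod_cast div_le_log_of_exp_one_pow_le (p := 7) (q := 4)
    (by norm_num) (by norm_num) ((exp_one_pow_le 7).trans (by norm_num))
  have h_log_seven_fourths : 11 / 20 ≤ log (7 / 4) :=
    mod_cast div_le_log_of_exp_one_pow_le (p := 11) (q := 20)
      (by norm_num) (by norm_num) ((exp_one_pow_le 11).trans (by norm_num))
  have h_log : 7 / 4 ≤ log x := h_log_six.trans (log_le_log (by norm_num) hx)
  have h_log_log : 11 / 20 ≤ log (log x) :=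
    h_log_seven_fourths.trans (log_le_log (by norm_num) h_log)
  linarith

lemma four_fifths_mul_le_mul_log_add_mul_log_log_sub {x : ℝ} (hx : 6 ≤ x) :
    4 / 5 * x ≤ x * log x + x * log (log x) - 3 * x / 2 := by
  have h := mul_le_mul_of_nonneg_left (le_log_add_log_log_of_six_le hx) (by linarith : 0 ≤ x)
  linarith

lemma quadratic_lt_four_fifths_mul_cube {x : ℝ} (hx : 6 ≤ x) :
    2 / 7 * (3 * x) ^ 2 + 3 * x / 2 < (4 / 5 * x) ^ 3 := by
  have h_factor : 0 < x * (64 / 125 * x ^ 2 - 18 / 7 * x - 3 / 2) :=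
    mul_pos (by linarith) (by nlinarith)
  linarith

theorem ineq_3_14_general {x : ℝ} (hx : 6 ≤ x) :
    3 * x * log (3 * x) + 3 * x * log (log (3 * x)) - 3 * x / 2 <
      (x * log x + x * log (log x) - 3 * x / 2) ^ 3 :=
  calc 3 * x * log (3 * x) + 3 * x * log (log (3 * x)) - 3 * x / 2
      ≤ 2 / 7 * (3 * x) ^ 2 + 3 * x / 2 := mul_log_add_mul_log_log_sub_half_le (by linarith)
    _ < (4 / 5 * x) ^ 3 := quadratic_lt_four_fifths_mul_cube hx
    _ ≤ (x * log x + x * log (log x) - 3 * x / 2) ^ 3 := by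
      gcongr
      exact four_fifths_mul_le_mul_log_add_mul_log_log_sub hx

theorem ineq_3_14 (n : ℕ) (hn : 195340 ≤ n) :
    3 * (n : ℝ) * Real.log (3 * (n : ℝ)) + 3 * (n : ℝ) * Real.log (Real.log (3 * (n : ℝ)))
        - 3 * (n : ℝ) / 2 <
      ((n : ℝ) * Real.log n + (n : ℝ) * Real.log (Real.log n) - 3 * (n : ℝ) / 2) ^ 3 :=
  ineq_3_14_general (by exact_mod_cast (by norm_num : 6 ≤ 195340).trans hn)
end
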